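/- Let α and β be ordinals, n and m positive integers, and let p be a continuous surjection from the ordinal space ω^β·m + 1 onto the ordinal space ω^α·n + 1. Then for every ordinal γ and every point z of ω^α·n + 1 that lies in the γ-th Cantor–Bendixson derivative of the space ω^α·n + 1, the fiber p⁻¹(z) contains a point lying in the γ-th Cantor–Bendixson derivative of the space ω^β·m + 1 (i.e., a point of limit type at least γ). -/

import Mathlib

/-!
The statement is an instance of a fact about any continuous surjection `p : X → Y` from a compact
Hausdorff space onto a Hausdorff space: `D(γ)` of `Y` is contained in the image of `D(γ)` of `X`
(`exists_mem_cbDeriv_of_surjective`), by induction on `γ`.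

* Successor step (`exists_mem_dSet_of_subset_image`): if `z` is an accumulation point of `B ⊆ p '' C`
  with `C` compact, then the punctured neighbourhoods of `z` pull back to a proper filter on `C`.
  A cluster point `w` of it satisfies `p w = z`, and is an accumulation point of `C` because the
  filter lives on points which `p` does not send to `z`, hence on points different from `w`.
* Limit step: the sets `p ⁻¹' {z} ∩ D(γ)` are nonempty, compact and decreasing in `γ`, so they have
  a common point.

Ordinal spaces `{ξ : ξ ≤ o}` are compact since closed intervals of ordinals are.
-/

open Set Filter

noncomputable section

/-- The ordinal space `{ξ : ξ ≤ o}` with its order topology. -/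
def OrdSpace (o : Ordinal) : Type _ := Set.Iic o

instance (o : Ordinal) : LinearOrder (OrdSpace o) :=
  inferInstanceAs (LinearOrder (Set.Iic o))

instance (o : Ordinal) : TopologicalSpace (OrdSpace o) := Preorder.topology (OrdSpace o)

instance (o : Ordinal) : OrderTopology (OrdSpace o) := ⟨rfl⟩

/-- `X ≃ ω^γ·k + 1` in the sense of the paper: `X` is homeomorphic to the
ordinal space `{ξ : ξ ≤ o}` with its order topology. -/
def HomeoOrd (X : Type*) [TopologicalSpace X] (o : Ordinal) : Prop :=
  Nonempty (X ≃ₜ OrdSpace o)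

/-- The derived set of `A`: the set of accumulation points of `A` in the ambient space. -/
def dSet {X : Type*} [TopologicalSpace X] (A : Set X) : Set X :=
  {x | AccPt x (Filter.principal A)}

/-- The iterated Cantor–Bendixson derivatives of `A` (within the ambient space `X`):
`D(0) = A`, `D(γ+1)` is the derived set of `D(γ)`, and `D(λ) = ⋂_{γ<λ} D(γ)` at limits. -/
def cbDeriv {X : Type*} [TopologicalSpace X] (A : Set X) (o : Ordinal) : Set X :=
  Ordinal.limitRecOn o A (fun _ ih => dSet ih)
    (fun o _ ih => ⋂ (γ : Ordinal) (h : γ < o), ih γ h)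

theorem cbDeriv_zero {X : Type*} [TopologicalSpace X] (A : Set X) : cbDeriv A 0 = A :=
  Ordinal.limitRecOn_zero ..

theorem cbDeriv_add_one {X : Type*} [TopologicalSpace X] (A : Set X) (o : Ordinal) :
    cbDeriv A (o + 1) = dSet (cbDeriv A o) :=
  Ordinal.limitRecOn_add_one ..

theorem cbDeriv_limit {X : Type*} [TopologicalSpace X] (A : Set X) {o : Ordinal}
    (ho : Order.IsSuccLimit o) : cbDeriv A o = ⋂ (γ : Ordinal) (_ : γ < o), cbDeriv A γ :=
  Ordinal.limitRecOn_limit _ _ _ _ ho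

theorem isClosed_cbDeriv {X : Type*} [TopologicalSpace X] [T1Space X] {A : Set X}
    (hA : IsClosed A) (o : Ordinal) : IsClosed (cbDeriv A o) := by
  induction o using Ordinal.limitRecOn with
  | zero => rwa [cbDeriv_zero]
  | add_one o _ => rw [cbDeriv_add_one]; exact isClosed_derivedSet _
  | limit o ho ih =>
    rw [cbDeriv_limit A ho]
    exact isClosed_biInter fun γ h => ih γ h

theorem cbDeriv_antitone {X : Type*} [TopologicalSpace X] [T1Space X] {A : Set X}
    (hA : IsClosed A) : Antitone (cbDeriv A) := by
  intro γ o
  induction o using Ordinal.limitRecOn with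
  | zero =>
    intro h
    rw [nonpos_iff_eq_zero.1 h]
  | add_one o ih =>
    intro h
    rcases h.eq_or_lt with rfl | h
    · exact le_rfl
    · rw [cbDeriv_add_one]
      refine le_trans ?_ (ih (Order.lt_add_one_iff.1 h))
      exact (isClosed_iff_derivedSet_subset _).1 (isClosed_cbDeriv hA o)
  | limit o ho _ =>
    intro h
    rcases h.eq_or_lt with rfl | h
    · exact le_rfl
    · rw [cbDeriv_limit A ho]
      exact biInter_subset_of_mem h

/-- The successor step: over an accumulation point of a set covered by the image of a compact `C`
there is an accumulation point of `C`. -/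
theorem exists_mem_dSet_of_subset_image {X Y : Type*} [TopologicalSpace X] [TopologicalSpace Y]
    [T2Space Y] {p : X → Y} (hp : Continuous p) {C : Set X} (hC : IsCompact C) {B : Set Y}
    (hB : B ⊆ p '' C) {z : Y} (hz : z ∈ dSet B) : ∃ w, p w = z ∧ w ∈ dSet C := by
  have hz' : ∃ᶠ y in nhdsWithin z {z}ᶜ, y ∈ B := accPt_iff_frequently_nhdsNE.1 hz
  have : NeBot (comap p (nhdsWithin z {z}ᶜ) ⊓ 𝓟 C) := by
    rw [← frequently_mem_iff_neBot, frequently_comap]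
    refine hz'.mono fun y hy => ?_
    obtain ⟨x, hx, rfl⟩ := hB hy
    exact ⟨x, rfl, hx⟩
  obtain ⟨w, -, hw⟩ := hC.exists_clusterPt (f := comap p (nhdsWithin z {z}ᶜ) ⊓ 𝓟 C) inf_le_right
  have hpw : p w = z := by
    have h1 : ClusterPt (p w) (nhds z) :=
      (hw.mono inf_le_left).map hp.continuousAt
        (tendsto_comap.mono_right nhdsWithin_le_nhds)
    exact eq_of_nhds_neBot h1
  refine ⟨w, hpw, accPt_iff_clusterPt.2 (hw.mono ?_)⟩
  refine inf_le_inf_right _ (le_principal_iff.2 ⟨{z}ᶜ, self_mem_nhdsWithin, ?_⟩)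
  rintro x hx rfl
  exact hx hpw

theorem exists_mem_cbDeriv_of_surjective {X Y : Type*} [TopologicalSpace X] [TopologicalSpace Y]
    [CompactSpace X] [T2Space X] [T2Space Y] {p : X → Y} (hp : Continuous p)
    (hps : Function.Surjective p) (γ : Ordinal) :
    ∀ z ∈ cbDeriv (univ : Set Y) γ, ∃ w, p w = z ∧ w ∈ cbDeriv (univ : Set X) γ := by
  induction γ using Ordinal.limitRecOn with
  | zero =>
    intro z _
    obtain ⟨w, hw⟩ := hps z
    exact ⟨w, hw, by rw [cbDeriv_zero]; trivial⟩
  | add_one γ ih =>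
    intro z hz
    rw [cbDeriv_add_one] at hz ⊢
    refine exists_mem_dSet_of_subset_image hp (isClosed_cbDeriv isClosed_univ γ).isCompact ?_ hz
    intro y hy
    obtain ⟨w, hw, hw'⟩ := ih y hy
    exact ⟨w, hw', hw⟩
  | limit o ho ih =>
    intro z hz
    rw [cbDeriv_limit _ ho] at hz ⊢
    have hcl : ∀ γ : Iio o, IsClosed (p ⁻¹' {z} ∩ cbDeriv (univ : Set X) γ) := fun γ =>
      (isClosed_singleton.preimage hp).inter (isClosed_cbDeriv isClosed_univ _)
    have : Nonempty (Iio o) := ⟨⟨0, ho.bot_lt⟩⟩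
    have hanti : Antitone fun γ : Iio o => p ⁻¹' {z} ∩ cbDeriv (univ : Set X) γ :=
      fun a b hab => inter_subset_inter_right _ (cbDeriv_antitone isClosed_univ hab)
    obtain ⟨w, hw⟩ := IsCompact.nonempty_iInter_of_directed_nonempty_isCompact_isClosed
      (fun γ : Iio o => p ⁻¹' {z} ∩ cbDeriv (univ : Set X) γ) hanti.directed_ge
      (fun γ => ih γ γ.2 z (mem_iInter₂.1 hz γ γ.2)) (fun γ => (hcl γ).isCompact) hcl
    rw [mem_iInter] at hw
    exact ⟨w, (hw this.some).1, mem_iInter₂.2 fun γ h => (hw ⟨γ, h⟩).2⟩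

theorem compactSpace_ordSpace (o : Ordinal) : CompactSpace (OrdSpace o) := by
  have h : CompactSpace (Iic o) := by
    rw [← isCompact_iff_compactSpace, ← Icc_bot]
    exact isCompact_Icc
  -- On the order-convex set `Iic o` the subspace topology is the order topology of `OrdSpace o`.
  have e : (instTopologicalSpaceSubtype : TopologicalSpace (Iic o)) = Preorder.topology (Iic o) :=
    OrderTopology.topology_eq_generate_intervals
  rw [e] at h
  exact h

theorem stmt9 (α β : Ordinal) (n m : ℕ) (hn : 0 < n) (hm : 0 < m)
    (p : OrdSpace (Ordinal.omega0 ^ β * m) → OrdSpace (Ordinal.omega0 ^ α * n))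
    (hp : Continuous p) (hps : Function.Surjective p) :
    ∀ (γ : Ordinal) (z : OrdSpace (Ordinal.omega0 ^ α * n)),
      z ∈ cbDeriv (Set.univ : Set (OrdSpace (Ordinal.omega0 ^ α * n))) γ →
      ∃ w : OrdSpace (Ordinal.omega0 ^ β * m),
        p w = z ∧ w ∈ cbDeriv (Set.univ : Set (OrdSpace (Ordinal.omega0 ^ β * m))) γ := by
  have := compactSpace_ordSpace (Ordinal.omega0 ^ β * m)
  exact exists_mem_cbDeriv_of_surjective hp hps

end
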